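/- If D is a digraph of order n, then dc(D) + dc(D^c) ≤ n + 1, where D^c denotes the complement of D. -/

import Mathlib

/-!
Color the vertices one at a time. If `v` has no out-neighbor in some color class, then no
directed cycle passes through `v` after it is added to that class, so `v` can take that color.
Hence `v` needs a new color in both `D` and its complement only if, among the vertices colored
so far, it has at least `k` out-neighbors in `D` and at least `k'` in the complement, where `k`
and `k'` are the numbers of colors in use. These two out-neighborhoods are disjoint, so then
`k + k' ≤ |S|` for the set `S` of colored vertices, and two new colors are affordable. This keeps
`k + k' ≤ |S| + 1` throughout (`colorableOn_insert_or` and the induction in the main proof).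
-/

/-
Common definitions.

A digraph `D : Digraph V` on a finite vertex type `V` is loopless when
`∀ v, ¬ D.Adj v v` (this appears as a hypothesis in the theorems below).
-/

namespace Paper

open Function

variable {V : Type*}

/-- A set `S` of vertices of `D` is acyclic if the arc relation restricted to `S`
admits no vertex with a nonempty directed walk from itself back to itself
(i.e. the subdigraph induced on `S` has no directed cycle). -/
def AcyclicSet (D : Digraph V) (S : Set V) : Prop :=
  ∀ v : V, ¬ Relation.TransGen (fun a b => a ∈ S ∧ b ∈ S ∧ D.Adj a b) v v

/-- An acyclic coloring: every color class is acyclic. -/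
def IsAcyclicColoring (D : Digraph V) {k : ℕ} (c : V → Fin k) : Prop :=
  ∀ i : Fin k, AcyclicSet D {v | c v = i}

/-- A complete coloring: for every ordered pair of distinct colors there is an arc
from a vertex of the first color to a vertex of the second color. -/
def IsCompleteColoring (D : Digraph V) {k : ℕ} (c : V → Fin k) : Prop :=
  ∀ i j : Fin k, i ≠ j → ∃ u v : V, D.Adj u v ∧ c u = i ∧ c v = j

/-- The dichromatic number `dc(D)`: the least number of colors in an acyclic coloring. -/
noncomputable def dichromatic (D : Digraph V) [Fintype V] : ℕ :=
  sInf {k : ℕ | ∃ c : V → Fin k, IsAcyclicColoring D c}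

/-- The diachromatic number `dac(D)`: the largest number of colors in an acyclic
complete coloring (a coloring "with `k` colors" uses all `k` colors, i.e. is surjective). -/
noncomputable def diachromatic (D : Digraph V) [Fintype V] : ℕ :=
  sSup {k : ℕ | ∃ c : V → Fin k,
    Surjective c ∧ IsAcyclicColoring D c ∧ IsCompleteColoring D c}

/-- The color (a positive integer; `1` is the first color) that the greedy algorithm,
run along the vertex ordering `e` (position `0` first), assigns to the vertex in
position `i`: namely the smallest positive color whose current class stays acyclic
after adding this vertex (a fresh color has an empty class, so for a loopless digraph
this in particular uses a new color exactly when the vertex forms a directed cycle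
with every currently used class). -/
noncomputable def greedyColorAt (D : Digraph V) [Fintype V]
    (e : Fin (Fintype.card V) ≃ V) (i : Fin (Fintype.card V)) : ℕ :=
  sInf {c : ℕ | 1 ≤ c ∧
    AcyclicSet D (insert (e i)
      {v : V | ∃ j : Fin (Fintype.card V), ∃ _ : j < i, e j = v ∧ greedyColorAt D e j = c})}
termination_by i.val
decreasing_by exact ‹_›

/-- The greedy coloring of `D` with respect to the vertex ordering `e`. -/
noncomputable def greedyColoring (D : Digraph V) [Fintype V]
    (e : Fin (Fintype.card V) ≃ V) : V → ℕ :=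
  fun v => greedyColorAt D e (e.symm v)

/-- The number of colors used by the greedy coloring with respect to `e`. -/
noncomputable def greedyCount (D : Digraph V) [Fintype V]
    (e : Fin (Fintype.card V) ≃ V) : ℕ :=
  (Finset.univ.image (greedyColoring D e)).card

/-- The digrundy number `dG(D)`: the largest number of colors used by a greedy
coloring, over all orderings of the vertices. -/
noncomputable def digrundy (D : Digraph V) [Fintype V] : ℕ :=
  sSup {k : ℕ | ∃ e : Fin (Fintype.card V) ≃ V, greedyCount D e = k}

/-- The complement of a digraph: arcs are exactly the ordered pairs of distinct
vertices that are not arcs of `D`. -/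
def digraphCompl (D : Digraph V) : Digraph V :=
  ⟨fun u v => u ≠ v ∧ ¬ D.Adj u v⟩

/-- The maximum out-degree `Δ⁺(D)`. -/
noncomputable def maxOutDegree (D : Digraph V) [Fintype V] : ℕ :=
  ⨆ v : V, {u : V | D.Adj v u}.ncard

/-- The maximum in-degree `Δ⁻(D)`. -/
noncomputable def maxInDegree (D : Digraph V) [Fintype V] : ℕ :=
  ⨆ v : V, {u : V | D.Adj u v}.ncard

/-- The clique number `ω(D)`: the maximum size of a set of vertices every two of
which are joined by arcs in both directions. -/
noncomputable def cliqueNumber (D : Digraph V) [Fintype V] : ℕ :=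
  sSup {k : ℕ | ∃ S : Finset V, S.card = k ∧ ∀ u ∈ S, ∀ v ∈ S, u ≠ v → D.Adj u v}

/-- The subdigraph of `D` induced on a set `S` of vertices. -/
def induceD (D : Digraph V) (S : Set V) : Digraph S :=
  ⟨fun u v => D.Adj u v⟩

/-- A parsimonious coloring along the vertex ordering `e`: an acyclic coloring, built
along `e`, in which each vertex must receive an already-used color whenever some
existing color class remains acyclic upon adding the vertex, and receives the smallest
unused positive integer only if adding it to every existing class creates a directed
cycle. -/
def IsParsimonious (D : Digraph V) [Fintype V]
    (e : Fin (Fintype.card V) ≃ V) (c : V → ℕ) : Prop :=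
  (∀ i : ℕ, AcyclicSet D {v | c v = i}) ∧
  ∀ i : Fin (Fintype.card V),
    ((∃ d : ℕ, (∃ j, j < i ∧ c (e j) = d) ∧
        AcyclicSet D (insert (e i) {v : V | ∃ j, j < i ∧ e j = v ∧ c v = d})) →
      ∃ j, j < i ∧ c (e j) = c (e i)) ∧
    ((¬ ∃ d : ℕ, (∃ j, j < i ∧ c (e j) = d) ∧
        AcyclicSet D (insert (e i) {v : V | ∃ j, j < i ∧ e j = v ∧ c v = d})) →
      c (e i) = sInf {m : ℕ | 1 ≤ m ∧ ∀ j, j < i → c (e j) ≠ m})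

/-- The parsimonious `e`-coloring number `dc_e(D)`: the minimum number of colors in a
parsimonious coloring along `e`. -/
noncomputable def parsimoniousNumber (D : Digraph V) [Fintype V]
    (e : Fin (Fintype.card V) ≃ V) : ℕ :=
  sInf {k : ℕ | ∃ c : V → ℕ, IsParsimonious D e c ∧ (Finset.univ.image c).card = k}

/-- The diochromatic number `dc^o(D)`: the maximum of the parsimonious coloring
numbers over all orderings of the vertices. -/
noncomputable def diochromatic (D : Digraph V) [Fintype V] : ℕ :=
  sSup {k : ℕ | ∃ e : Fin (Fintype.card V) ≃ V, parsimoniousNumber D e = k}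

end Paper

namespace Paper

lemma AcyclicSet.mono {V : Type*} {D : Digraph V} {S T : Set V} (hT : AcyclicSet D T)
    (hST : S ⊆ T) : AcyclicSet D S := fun v hv =>
  hT v (hv.lift id fun _ _ h => ⟨hST h.1, hST h.2.1, h.2.2⟩)

/-- Adding a sink to an acyclic set keeps it acyclic. -/
lemma AcyclicSet.insert_sink {V : Type*} {D : Digraph V} {S : Set V} {v : V}
    (hS : AcyclicSet D S) (hv : ¬ D.Adj v v) (hsink : ∀ u ∈ S, ¬ D.Adj v u) :
    AcyclicSet D (insert v S) := by
  have start : ∀ a b, (a ∈ insert v S ∧ b ∈ insert v S ∧ D.Adj a b) → a ≠ v := by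
    rintro a b ⟨-, hb, hab⟩ rfl
    rcases hb with rfl | hb
    · exact hv hab
    · exact hsink b hb hab
  have lift : ∀ a b, Relation.TransGen
      (fun a b => a ∈ insert v S ∧ b ∈ insert v S ∧ D.Adj a b) a b → b ≠ v →
      Relation.TransGen (fun a b => a ∈ S ∧ b ∈ S ∧ D.Adj a b) a b := by
    intro a b hab
    induction hab with
    | single h =>
      intro hb
      exact .single ⟨h.1.resolve_left (start _ _ h), h.2.1.resolve_left hb, h.2.2⟩
    | tail _ h ih =>
      intro hc
      exact (ih (start _ _ h)).tail
        ⟨h.1.resolve_left (start _ _ h), h.2.1.resolve_left hc, h.2.2⟩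
  intro w hw
  obtain ⟨b, hb, -⟩ := Relation.TransGen.head'_iff.1 hw
  exact hS w (lift w w hw (start _ _ hb))

/-- The subdigraph of `D` induced on `S` has an acyclic coloring with colors `0, …, k - 1`.
The coloring is a total function whose values off `S` are irrelevant. -/
def ColorableOn {V : Type*} (D : Digraph V) (S : Finset V) (k : ℕ) : Prop :=
  ∃ c : V → ℕ, (∀ v ∈ S, c v < k) ∧ ∀ i, AcyclicSet D {v | v ∈ S ∧ c v = i}

open Classical in
/-- A new vertex `v` may take any color `i` in which it has no out-neighbor; here `i` may be an
old color or a fresh one. -/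
lemma colorableOn_insert {V : Type*} {D : Digraph V} {S : Finset V} {c : V → ℕ} {v : V}
    {i m : ℕ} (hv : ¬ D.Adj v v) (hvS : v ∉ S) (hc : ∀ u ∈ S, c u < m) (hi : i < m)
    (hac : ∀ j, AcyclicSet D {u | u ∈ S ∧ c u = j}) (hsink : ∀ u ∈ S, c u = i → ¬ D.Adj v u) :
    ColorableOn D (insert v S) m := by
  have hne : ∀ u ∈ S, u ≠ v := fun u hu h => hvS (h ▸ hu)
  refine ⟨Function.update c v i, fun u hu => ?_, fun j => ?_⟩
  · rcases Finset.mem_insert.1 hu with rfl | hu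
    · simpa using hi
    · simpa [Function.update_of_ne (hne u hu)] using hc u hu
  · by_cases hj : j = i
    · subst hj
      refine ((hac j).insert_sink hv fun u hu => hsink u hu.1 hu.2).mono ?_
      rintro u ⟨hu, huc⟩
      rcases Finset.mem_insert.1 hu with rfl | hu
      · exact Or.inl rfl
      · exact Or.inr ⟨hu, by rwa [Function.update_of_ne (hne u hu)] at huc⟩
    · refine (hac j).mono ?_
      rintro u ⟨hu, huc⟩
      rcases Finset.mem_insert.1 hu with rfl | hu
      · exact absurd (by simpa using huc.symm) hj
      · exact ⟨hu, by rwa [Function.update_of_ne (hne u hu)] at huc⟩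

open Classical in
lemma ColorableOn.insert_succ {V : Type*} {D : Digraph V} {S : Finset V} {v : V} {k : ℕ}
    (h : ColorableOn D S k) (hv : ¬ D.Adj v v) (hvS : v ∉ S) :
    ColorableOn D (insert v S) (k + 1) := by
  obtain ⟨c, hc, hac⟩ := h
  exact colorableOn_insert hv hvS (fun u hu => (hc u hu).trans k.lt_succ_self) k.lt_succ_self hac
    fun u hu huk => absurd huk (hc u hu).ne

open Classical in
/-- If no old color is available for `v`, then `v` has an out-neighbor in each of the `k`
classes. -/
lemma colorableOn_insert_or {V : Type*} {D : Digraph V} {S : Finset V} {v : V} {k : ℕ}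
    (h : ColorableOn D S k) (hv : ¬ D.Adj v v) (hvS : v ∉ S) :
    ColorableOn D (insert v S) k ∨ k ≤ (S.filter fun u => D.Adj v u).card := by
  obtain ⟨c, hc, hac⟩ := h
  by_cases hex : ∃ i < k, ∀ u ∈ S, c u = i → ¬ D.Adj v u
  · obtain ⟨i, hi, hsink⟩ := hex
    exact Or.inl (colorableOn_insert hv hvS hc hi hac hsink)
  · push Not at hex
    right
    have hsub : Finset.range k ⊆ (S.filter fun u => D.Adj v u).image c := by
      intro i hi
      obtain ⟨u, hu, hui, huv⟩ := hex i (Finset.mem_range.1 hi)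
      exact Finset.mem_image.2 ⟨u, Finset.mem_filter.2 ⟨hu, huv⟩, hui⟩
    simpa using (Finset.card_le_card hsub).trans Finset.card_image_le

lemma ColorableOn.dichromatic_le {V : Type*} [Fintype V] {D : Digraph V} {k : ℕ}
    (h : ColorableOn D Finset.univ k) : dichromatic D ≤ k := by
  obtain ⟨c, hc, hac⟩ := h
  refine Nat.sInf_le ⟨fun v => ⟨c v, hc v (Finset.mem_univ v)⟩, fun i => (hac i).mono ?_⟩
  intro v hv
  exact ⟨Finset.mem_univ v, congrArg Fin.val hv⟩

/-- If `D` is a digraph of order `n`, then `dc(D) + dc(Dᶜ) ≤ n + 1`. -/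
theorem dichromatic_nordhaus_gaddum {V : Type*} [Fintype V]
    (D : Digraph V) (hD : ∀ v : V, ¬ D.Adj v v) :
    dichromatic D + dichromatic (digraphCompl D) ≤ Fintype.card V + 1 := by
  classical
  have hE : ∀ v : V, ¬ (digraphCompl D).Adj v v := fun v h => h.1 rfl
  have key : ∀ S : Finset V, ∃ k k', k + k' ≤ S.card + 1 ∧ ColorableOn D S k ∧
      ColorableOn (digraphCompl D) S k' := by
    intro S
    induction S using Finset.induction_on with
    | empty =>
      have h0 : ∀ E : Digraph V, ColorableOn E ∅ 0 := fun E =>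
        ⟨fun _ => 0, by simp, fun i v hv => by
          obtain ⟨b, hb, -⟩ := Relation.TransGen.head'_iff.1 hv
          simpa using hb.1⟩
      exact ⟨0, 0, by simp, h0 _, h0 _⟩
    | insert v S hvS ih =>
      obtain ⟨k, k', hk, h, h'⟩ := ih
      rw [Finset.card_insert_of_notMem hvS]
      rcases colorableOn_insert_or h (hD v) hvS with g | g
      · exact ⟨k, k' + 1, by omega, g, h'.insert_succ (hE v) hvS⟩
      rcases colorableOn_insert_or h' (hE v) hvS with g' | g'
      · exact ⟨k + 1, k', by omega, h.insert_succ (hD v) hvS, g'⟩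
      -- No old color is available in either digraph: the out-neighborhoods are disjoint.
      have hsub : (S.filter fun u => (digraphCompl D).Adj v u).card ≤
          (S.filter fun u => ¬ D.Adj v u).card :=
        Finset.card_le_card (Finset.monotone_filter_right S fun u _ hu => hu.2)
      have hsum := Finset.card_filter_add_card_filter_not (s := S) (fun u => D.Adj v u)
      exact ⟨k + 1, k' + 1, by omega, h.insert_succ (hD v) hvS, h'.insert_succ (hE v) hvS⟩
  obtain ⟨k, k', hk, h, h'⟩ := key Finset.univ
  exact (Nat.add_le_add h.dichromatic_le h'.dichromatic_le).trans hk

end Paper
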